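/- arXiv:1705.03857 — 2 statements merged into one kernel-verified Lean document; each statement's English description precedes it below -/
import Mathlib

section
/- If a prime p divides q_n = d_n/(n+1), then p ≤ (n+2)/2 when n is even, and p ≤ (n+2)/3 when n is odd. -/
/-!
Write `N = n + 1`. By Faulhaber's formula `P` equals, up to an integer constant,
`(1/N) * ∑ i < N, C(N,i) B'_i X^(N-i)`, whose leading coefficient is `1/N`; hence `N ∣ d`, and
`d / N` divides any `m` which clears the denominators of all the numbers `C(N,i) B'_i`
(`denom_div_dvd`). So if `p ∣ d / N`, some `C(N,i) B'_i` with `i < N` fails to be `p`-integral.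

By von Staudt–Clausen, `p * B'_i` is always `p`-integral, and `B'_i` itself is unless `1 ≤ i`
and `p - 1 ∣ i` (`mul_bernoulli'_mem_pInt`). For such `i`, if `p` exceeds the claimed bound, then
`p ∣ C(N,i)` (`dvd_choose_of_large`): for odd `p` the last base-`p` digit of `i` is larger than
that of `N`, so Lucas' theorem applies, and for `p = 2` only `N = 2` and `N = 4` remain. Either
way `C(N,i) B'_i` is `p`-integral, a contradiction.
-/

open Polynomial Finset

/-- `P` agrees at every natural `x` with the power sum `1^n + 2^n + ... + x^n`. -/
def evalPS (n : ℕ) (P : Polynomial ℚ) : Prop :=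
  ∀ x : ℕ, P.eval (x : ℚ) = ∑ k ∈ Finset.range (x + 1), (k : ℚ) ^ n

/-- `P` agrees at every natural `x` with `1^n + 2^n + ... + (x-1)^n`. -/
def evalPS' (n : ℕ) (P : Polynomial ℚ) : Prop :=
  ∀ x : ℕ, P.eval (x : ℚ) = ∑ k ∈ Finset.range x, (k : ℚ) ^ n

/-- all coefficients of `P` are integers. -/
def isIntPoly (P : Polynomial ℚ) : Prop := ∀ i, ∃ z : ℤ, P.coeff i = (z : ℚ)

/-- `d` is the least positive integer such that `d • P` has integer coefficients. -/
def isDenom (P : Polynomial ℚ) (d : ℕ) : Prop :=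
  0 < d ∧ isIntPoly ((d : ℚ) • P) ∧
    ∀ e : ℕ, 0 < e → isIntPoly ((e : ℚ) • P) → d ≤ e

/-- Lucas' theorem: a last base-`p` digit of `k` exceeding that of `N` forces `p ∣ C(N,k)`. -/
lemma dvd_choose_of_mod_lt {p N k : ℕ} (hp : p.Prime) (h : N % p < k % p) :
    p ∣ N.choose k := by
  have := Fact.mk hp
  have := Choose.choose_modEq_choose_mod_mul_choose_div_nat (n := N) (k := k) (p := p)
  rw [Nat.choose_eq_zero_of_lt h, zero_mul] at this
  exact (Nat.modEq_zero_iff_dvd).1 this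

/-- In terms of `N = n + 1`, the hypothesis `h` says that `p` exceeds the bound to be proved. -/
lemma dvd_choose_of_large {p N k : ℕ} (hp : p.Prime) (hk : 1 ≤ k) (hkN : k < N)
    (hdvd : p - 1 ∣ k)
    (h : (Odd N ∧ N + 1 < 2 * p) ∨ (Even N ∧ N + 1 < 3 * p)) : p ∣ N.choose k := by
  rcases hp.eq_two_or_odd' with rfl | hodd
  · rcases h with ⟨h1, h2⟩ | ⟨⟨c, rfl⟩, h2⟩
    · obtain ⟨c, rfl⟩ := h1
      omega
    · have : c = 1 ∨ c = 2 := by omega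
      rcases this with rfl | rfl
      · interval_cases k; decide
      · interval_cases k <;> decide
  · have hp2 := hp.two_le
    obtain ⟨a, rfl⟩ := hodd
    obtain ⟨m, rfl⟩ := hdvd
    simp only [Nat.add_sub_cancel] at *
    -- The size constraint leaves only `k = p - 1` and `k = 2 (p - 1)`.
    have hm : m < 3 := by
      by_contra hm
      have : 2 * a * 3 ≤ 2 * a * m := Nat.mul_le_mul_left _ (by omega)
      rcases h with ⟨-, h2⟩ | ⟨⟨c, rfl⟩, h2⟩ <;> omega
    apply dvd_choose_of_mod_lt hp
    have hk1 : (2 * a) % (2 * a + 1) = 2 * a := Nat.mod_eq_of_lt (by omega)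
    have hk2 : (2 * a * 2) % (2 * a + 1) = 2 * a - 1 := by
      rw [show 2 * a * 2 = (2 * a - 1) + (2 * a + 1) by omega, Nat.add_mod_right,
        Nat.mod_eq_of_lt (by omega)]
    have hN1 : 2 * a + 1 ≤ N → N < 2 * (2 * a + 1) → N % (2 * a + 1) = N - (2 * a + 1) := by
      intro h1 h2
      rw [Nat.mod_eq_sub_mod h1, Nat.mod_eq_of_lt (by omega)]
    have hN2 : 2 * (2 * a + 1) ≤ N → N < 3 * (2 * a + 1) →
        N % (2 * a + 1) = N - 2 * (2 * a + 1) := by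
      intro h1 h2
      rw [Nat.mod_eq_sub_mod (by omega), Nat.mod_eq_sub_mod (by omega),
        Nat.mod_eq_of_lt (by omega)]
      omega
    rcases h with ⟨-, h2⟩ | ⟨⟨c, rfl⟩, h2⟩
    · obtain rfl : m = 1 := by interval_cases m <;> omega
      rw [mul_one] at *
      rw [hk1, hN1 (by omega) (by omega)]
      omega
    · by_cases hc : c + c < 2 * (2 * a + 1)
      · -- Here `N ≤ 2p - 2` by parity, so only `k = p - 1` fits below `N`.
        obtain rfl : m = 1 := by interval_cases m <;> omega
        rw [mul_one] at *
        rw [hk1, hN1 (by omega) hc]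
        omega
      · rw [hN2 (by omega) (by omega)]
        interval_cases m
        · omega
        · rw [mul_one, hk1]; omega
        · rw [hk2]; omega

/-- The ring of `p`-integral rationals. -/
abbrev pInt (p : ℕ) [Fact p.Prime] : Subring ℚ := (Rat.padicValuation p).integer

lemma mem_pInt_iff {p : ℕ} [Fact p.Prime] {x : ℚ} : x ∈ pInt p ↔ ¬ p ∣ x.den :=
  Rat.padicValuation_le_one_iff

lemma one_div_mem_pInt {p q : ℕ} [Fact p.Prime] (hq : q.Prime) (h : q ≠ p) :
    (1 : ℚ) / q ∈ pInt p := by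
  rw [mem_pInt_iff, show ((1 : ℚ) / q).den = q by simp [hq.ne_zero],
    Nat.prime_dvd_prime_iff_eq Fact.out hq]
  exact h.symm

/-- The consequence of von Staudt–Clausen used here: the denominator of `B'_i` contains `p` at most
once, and only if `1 ≤ i` and `p - 1 ∣ i`. -/
lemma mul_bernoulli'_mem_pInt {p i c : ℕ} [hp : Fact p.Prime]
    (hc : 1 ≤ i → p - 1 ∣ i → p ∣ c) : (c : ℚ) * bernoulli' i ∈ pInt p := by
  have mul_one_div : ∀ q : ℕ, q.Prime → 1 ≤ i → q - 1 ∣ i → (c : ℚ) * (1 / q) ∈ pInt p := by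
    intro q hq hi hqi
    by_cases hqp : q = p
    · subst hqp
      obtain ⟨e, rfl⟩ := hc hi hqi
      have : (q : ℚ) ≠ 0 := by exact_mod_cast hq.ne_zero
      rw [show ((q * e : ℕ) : ℚ) * (1 / q) = (e : ℚ) by push_cast; field_simp]
      exact natCast_mem _ e
    · exact mul_mem (natCast_mem _ c) (one_div_mem_pInt hq hqp)
  rcases Nat.even_or_odd i with hi | hi
  · rw [← bernoulli_eq_bernoulli'_of_ne_one (by rintro rfl; simp at hi)]
    obtain ⟨k, rfl⟩ := hi
    rcases Nat.eq_zero_or_pos k with rfl | hk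
    · simp
    rw [← two_mul] at *
    obtain ⟨z, hz⟩ := Bernoulli.vonStaudt_clausen k
    rw [eq_sub_of_add_eq hz.symm, mul_sub, Finset.mul_sum]
    refine sub_mem (mul_mem (natCast_mem _ c) (intCast_mem _ z)) (sum_mem fun q hq => ?_)
    simp only [Finset.mem_filter] at hq
    exact mul_one_div q hq.2.1 (by omega) hq.2.2
  · by_cases h1 : i = 1
    · subst h1
      rw [bernoulli'_one]
      exact_mod_cast mul_one_div 2 Nat.prime_two le_rfl (by norm_num)
    · rw [bernoulli'_eq_zero_of_odd hi (by obtain ⟨k, rfl⟩ := hi; omega), mul_zero]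
      exact zero_mem _

/-- Faulhaber's formula; the constant `0 ^ n` accounts for the term `k = 0`, which is nonzero
only when `n = 0`. -/
lemma evalPS_eq {n : ℕ} {P : Polynomial ℚ} (hP : evalPS n P) :
    P = (∑ i ∈ range (n + 1),
      C (((n + 1).choose i : ℚ) * bernoulli' i / (n + 1)) * X ^ (n + 1 - i)) + C (0 ^ n) := by
  -- Both sides agree at every natural number.
  apply Polynomial.eq_of_infinite_eval_eq
  refine (Set.infinite_range_of_injective (Nat.cast_injective (R := ℚ))).mono ?_
  rintro _ ⟨x, rfl⟩
  have hsum := sum_Ico_pow x n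
  rw [Set.mem_ofPred_eq, hP x, Finset.range_eq_Ico, Finset.sum_eq_sum_Ico_succ_bot (by omega),
    zero_add, hsum, eval_add, eval_finsetSum, eval_C, add_comm]
  congr 1
  · refine Finset.sum_congr rfl fun i _ => ?_
    simp only [eval_mul, eval_C, eval_pow, eval_X]
    ring

lemma isIntPoly.add {P Q : Polynomial ℚ} (hP : isIntPoly P) (hQ : isIntPoly Q) :
    isIntPoly (P + Q) := fun i => by
  obtain ⟨a, ha⟩ := hP i
  obtain ⟨b, hb⟩ := hQ i
  exact ⟨a + b, by simp [ha, hb]⟩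

lemma isIntPoly.sum {s : Finset ℕ} {f : ℕ → Polynomial ℚ} (h : ∀ i ∈ s, isIntPoly (f i)) :
    isIntPoly (∑ i ∈ s, f i) :=
  Finset.sum_induction f isIntPoly (fun _ _ => isIntPoly.add) (fun _ => ⟨0, by simp⟩) h

lemma isIntPoly_C_mul_X_pow (z : ℤ) (k : ℕ) : isIntPoly (C (z : ℚ) * X ^ k) := fun i => by
  rw [coeff_C_mul_X_pow]
  split_ifs
  · exact ⟨z, rfl⟩
  · exact ⟨0, by simp⟩

/-- The denominator divides every natural number clearing denominators. -/
lemma isDenom.dvd {P : Polynomial ℚ} {d e : ℕ} (hd : isDenom P d)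
    (he : isIntPoly ((e : ℚ) • P)) : d ∣ e := by
  obtain ⟨hpos, hint, hmin⟩ := hd
  rw [Nat.dvd_iff_mod_eq_zero]
  by_contra hne
  refine absurd (hmin (e % d) (Nat.pos_of_ne_zero hne) fun i => ?_)
    (not_le.2 (Nat.mod_lt _ hpos))
  obtain ⟨a, ha⟩ := he i
  obtain ⟨b, hb⟩ := hint i
  rw [coeff_smul, smul_eq_mul] at ha hb ⊢
  have hdiv : ((e % d : ℕ) : ℚ) = e - d * (e / d : ℕ) := by
    rw [eq_sub_iff_add_eq]; exact_mod_cast Nat.mod_add_div e d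
  refine ⟨a - b * (e / d : ℕ), ?_⟩
  rw [Int.cast_sub, Int.cast_mul, Int.cast_natCast]
  rw [hdiv, ← ha, ← hb]
  ring

/-- `n + 1` divides the denominator, because the leading coefficient of `P` is `1 / (n + 1)`. -/
lemma succ_dvd_denom {n : ℕ} {P : Polynomial ℚ} {d : ℕ} (hP : evalPS n P) (hd : isDenom P d) :
    n + 1 ∣ d := by
  have hcoeff : P.coeff (n + 1) = 1 / (n + 1) := by
    rw [evalPS_eq hP, coeff_add, finsetSum_coeff, Finset.sum_eq_single 0]
    · simp [-map_pow, coeff_C_succ]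
    · intro i hi h0
      rw [coeff_C_mul_X_pow, if_neg (by simp at hi; omega)]
    · simp
  obtain ⟨z, hz⟩ := hd.2.1 (n + 1)
  rw [coeff_smul, hcoeff, smul_eq_mul] at hz
  have hn : (n + 1 : ℚ) ≠ 0 := by positivity
  have hz' : (d : ℚ) = (n + 1) * z := by rw [← hz]; field_simp
  have : ((n + 1 : ℕ) : ℤ) ∣ (d : ℤ) := ⟨z, by exact_mod_cast hz'⟩
  exact_mod_cast this

lemma denom_div_dvd {n : ℕ} {P : Polynomial ℚ} {d : ℕ} (hP : evalPS n P) (hd : isDenom P d)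
    (m : ℕ) (hm : ∀ i ∈ range (n + 1),
      (((n + 1).choose i : ℚ) * bernoulli' i).den ∣ m) : d / (n + 1) ∣ m := by
  rw [Nat.div_dvd_iff_dvd_mul (succ_dvd_denom hP hd) (Nat.succ_pos n)]
  apply hd.dvd
  have hn : (n + 1 : ℚ) ≠ 0 := by positivity
  rw [evalPS_eq hP, smul_add, Finset.smul_sum]
  refine isIntPoly.add (isIntPoly.sum fun i hi => ?_) ?_
  · have key : ∀ x : ℚ, x.den ∣ m → ∃ z : ℤ, (m : ℚ) * x = z := by
      rintro x ⟨e, rfl⟩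
      refine ⟨x.num * e, ?_⟩
      push_cast
      rw [← Rat.mul_den_eq_num x]
      ring
    obtain ⟨z, hz⟩ := key _ (hm i hi)
    rw [← smul_mul_assoc, smul_C, smul_eq_mul,
      show (((n + 1) * m : ℕ) : ℚ) * (((n + 1).choose i : ℚ) * bernoulli' i / (n + 1)) = z by
        rw [← hz]; push_cast; field_simp]
    exact isIntPoly_C_mul_X_pow z _
  · rw [smul_C, smul_eq_mul]
    simpa using isIntPoly_C_mul_X_pow (((n + 1) * m * 0 ^ n : ℕ) : ℤ) 0

theorem stmt6 (n : ℕ) (P : Polynomial ℚ) (d : ℕ)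
    (hP : evalPS n P) (hd : isDenom P d) (p : ℕ) (hp : p.Prime)
    (hpq : p ∣ d / (n + 1)) :
    (Even n → 2 * p ≤ n + 2) ∧ (Odd n → 3 * p ≤ n + 2) := by
  have := Fact.mk hp
  have main : ¬ ((Odd (n + 1) ∧ n + 1 + 1 < 2 * p) ∨ (Even (n + 1) ∧ n + 1 + 1 < 3 * p)) := by
    intro h
    have hdvd := hpq.trans (denom_div_dvd hP hd
      (∏ i ∈ range (n + 1), (((n + 1).choose i : ℚ) * bernoulli' i).den)
      fun i hi => Finset.dvd_prod_of_mem _ hi)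
    obtain ⟨i, hi, hpi⟩ := (hp.prime.dvd_finsetProd_iff _).1 hdvd
    exact mem_pInt_iff.1 (mul_bernoulli'_mem_pInt fun h1 h2 =>
      dvd_choose_of_large hp h1 (Finset.mem_range.1 hi) h2 h) hpi
  constructor
  · intro hn
    by_contra hlt
    exact main (Or.inl ⟨hn.add_one, by omega⟩)
  · intro hn
    by_contra hlt
    exact main (Or.inr ⟨hn.add_one, by omega⟩)
end

section
/- For every n ≥ 0, a prime p divides q_n = d_n/(n+1) if and only if the sum of the base-p digits of n+1 is at least p. -/
/-! Faulhaber's formula expresses `P` through a Bernoulli polynomial: writing `N = n + 1`, the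
coefficients of `N • (P - X ^ n)` are the numbers `N.choose k * B_k` with `k < N`, and zero.  The
leading one (`k = 0`) forces `N ∣ d`, and then `d / N` is the least common denominator of these
numbers.  Hence `p ∣ d / N` iff `p` divides the denominator of some `N.choose k * B_k` with `k < N`
(`dvd_quot_iff`).

By the von Staudt-Clausen theorem, `p` divides the denominator of `B_k` at most once, and for
`0 < k` with `(p - 1) ∣ k` exactly once, except when `k > 1` is odd and `p = 2` (where `B_k = 0`).
So the criterion becomes: some `0 < k < N` has `(p - 1) ∣ k` and `¬ p ∣ N.choose k`
(`exists_dvd_den_iff`); the exceptional case does no harm, as for odd `N` one may take `k = 1` and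
for even `N` an odd `k` gives an even binomial coefficient.

By Kummer's theorem `¬ p ∣ N.choose k` means that the digit sums of `k` and `N - k` add up to that
of `N`.  As `k` is congruent to its digit sum modulo `p - 1`, such a `k` has digit sum at least
`p - 1`, whence `N` has digit sum at least `p`; conversely, from an `N` with digit sum at least `p`
one splits off digits of total `p - 1` (`exists_split_digits`). -/

open Polynomial Finset

/-! ### Denominators of rational numbers -/

lemma not_dvd_den_of_mul_eq {p D : ℕ} {x : ℚ} {z : ℤ} (hD : ¬ p ∣ D) (h : (D : ℚ) * x = z) :
    ¬ p ∣ x.den := by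
  have hD0 : (D : ℚ) ≠ 0 := by
    rintro h0
    exact hD (by simp [Nat.cast_eq_zero.mp h0])
  have hx : x = Rat.divInt z D := by
    rw [Rat.divInt_eq_div, eq_div_iff (by simpa using hD0), mul_comm]
    simpa using h
  intro hp
  apply hD
  have := Rat.den_dvd z D
  rw [← hx] at this
  exact hp.trans (Int.natCast_dvd_natCast.mp this)

lemma den_dvd_of_mul_eq {q : ℕ} {x : ℚ} {z : ℤ} (hq : 0 < q) (h : (q : ℚ) * x = z) :
    x.den ∣ q := by
  have hx : x = Rat.divInt z q := by
    rw [Rat.divInt_eq_div, eq_div_iff (by simp; omega), mul_comm]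
    simpa using h
  have := Rat.den_dvd z q
  rw [← hx] at this
  exact Int.natCast_dvd_natCast.mp this

lemma exists_mul_eq_of_den_dvd {q : ℕ} {x : ℚ} (h : x.den ∣ q) :
    ∃ z : ℤ, (q : ℚ) * x = z := by
  obtain ⟨m, rfl⟩ := h
  refine ⟨m * x.num, ?_⟩
  have := Rat.den_mul_eq_num x
  push_cast
  linear_combination (m : ℚ) * this

/-! ### The `p`-part of the denominator of a Bernoulli number -/

/-- The von Staudt-Clausen theorem localized at `p`: up to the `p`-integral rational `z / D`, the
Bernoulli number is `-1 / p` or `0`. -/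
lemma bernoulli_two_mul_local {p : ℕ} (hp : p.Prime) {j : ℕ} (hj : 0 < j) :
    ∃ (D : ℕ) (z : ℤ), ¬ p ∣ D ∧
      (D : ℚ) * _root_.bernoulli (2 * j) = z - if (p - 1) ∣ 2 * j then (D : ℚ) / p else 0 := by
  obtain ⟨T, hT⟩ := Bernoulli.vonStaudt_clausen j
  set S := (range (2 * j + 2)).filter fun q ↦ q.Prime ∧ (q - 1) ∣ 2 * j with hS
  set R : ℚ := ∑ q ∈ S.erase p, (1 : ℚ) / q with hR
  have hsum : ∑ q ∈ S, (1 : ℚ) / q = (if (p - 1) ∣ 2 * j then (1 : ℚ) / p else 0) + R := by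
    split_ifs with h
    · have hpS : p ∈ S := by
        have := Nat.le_of_dvd (by omega) h
        simp only [hS, Finset.mem_filter, Finset.mem_range]
        exact ⟨by omega, hp, h⟩
      rw [← Finset.add_sum_erase _ _ hpS]
    · have hpS : p ∉ S := fun hh ↦ h (Finset.mem_filter.mp hh).2.2
      rw [hR, Finset.erase_eq_of_notMem hpS, zero_add]
  refine ⟨R.den, T * R.den - R.num, ?_, ?_⟩
  · intro h
    have h1 := h.trans (Rat.den_sum_dvd_prod_den (S.erase p) fun q : ℕ ↦ (1 : ℚ) / q)
    obtain ⟨q, hq, hpq⟩ := (hp.prime.dvd_finsetProd_iff _).mp h1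
    rw [Finset.mem_erase, hS, Finset.mem_filter] at hq
    obtain ⟨hne, -, hqp, -⟩ := hq
    rw [show ((1 : ℚ) / q).den = q by simp [hqp.ne_zero]] at hpq
    exact hne ((Nat.prime_dvd_prime_iff_eq hp hqp).mp hpq).symm
  · have hRd := Rat.den_mul_eq_num R
    rw [hsum] at hT
    push_cast
    split_ifs at hT ⊢ <;> linear_combination (-(R.den : ℚ)) * hT - hRd

lemma bernoulli_local_of_dvd {p : ℕ} (hp : p.Prime) {k : ℕ} (hk : k = 1 ∨ Even k) (hk0 : 0 < k)
    (h : (p - 1) ∣ k) :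
    ∃ (D : ℕ) (z : ℤ), ¬ p ∣ D ∧ (p : ℚ) * D * _root_.bernoulli k = p * z - D := by
  have hp0 : (p : ℚ) ≠ 0 := by exact_mod_cast hp.ne_zero
  rcases hk with rfl | ⟨j, rfl⟩
  · have hp2 : p = 2 := by
      have := Nat.dvd_one.mp h
      omega
    subst hp2
    exact ⟨1, 0, by norm_num, by norm_num [_root_.bernoulli_one]⟩
  · rw [← two_mul] at h ⊢
    obtain ⟨D, z, hD, hz⟩ := bernoulli_two_mul_local hp (j := j) (by omega)
    refine ⟨D, z, hD, ?_⟩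
    rw [if_pos h] at hz
    rw [mul_assoc, hz]
    field_simp

lemma not_dvd_den_bernoulli {p : ℕ} (hp : p.Prime) {k : ℕ}
    (h : ¬ (p - 1) ∣ k) : ¬ p ∣ (_root_.bernoulli k).den := by
  rcases Nat.even_or_odd k with ⟨j, rfl⟩ | hodd
  · rw [← two_mul] at h ⊢
    have hj : 0 < j := by
      rcases Nat.eq_zero_or_pos j with rfl | hj
      · simp at h
      · exact hj
    obtain ⟨D, z, hD, hz⟩ := bernoulli_two_mul_local hp hj
    rw [if_neg h, sub_zero] at hz
    exact not_dvd_den_of_mul_eq hD hz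
  · rcases (show k = 1 ∨ 1 < k by have := hodd.pos; omega) with rfl | h1
    · refine not_dvd_den_of_mul_eq (D := 2) (z := -1) (fun h2 ↦ ?_) (by norm_num [_root_.bernoulli_one])
      rw [(Nat.prime_dvd_prime_iff_eq hp Nat.prime_two).mp h2] at h
      simp at h
    · rw [_root_.bernoulli_eq_zero_of_odd hodd h1]
      simpa using hp.one_lt.ne'

/-- As `p * B_k` is always `p`-integral, a factor `p` cancels the denominator. -/
lemma not_dvd_den_mul_bernoulli {p : ℕ} (hp : p.Prime) {c k : ℕ} (hc : p ∣ c) :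
    ¬ p ∣ ((c : ℚ) * _root_.bernoulli k).den := by
  obtain ⟨m, rfl⟩ := hc
  have hp0 : (p : ℚ) ≠ 0 := by exact_mod_cast hp.ne_zero
  have hone : ¬ p ∣ 1 := by simpa using hp.one_lt.ne'
  by_cases h : (p - 1) ∣ k
  · by_cases hk : 0 < k ∧ (k = 1 ∨ Even k)
    · obtain ⟨D, z, hD, hz⟩ := bernoulli_local_of_dvd hp hk.2 hk.1 h
      refine not_dvd_den_of_mul_eq (z := m * (p * z - D)) hD ?_
      push_cast
      linear_combination (m : ℚ) * hz
    · rcases Nat.eq_zero_or_pos k with rfl | hk0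
      · exact not_dvd_den_of_mul_eq (D := 1) (z := p * m) hone (by simp)
      · have hodd : Odd k := by
          by_contra hh
          exact hk ⟨hk0, Or.inr (Nat.not_odd_iff_even.mp hh)⟩
        rw [_root_.bernoulli_eq_zero_of_odd hodd (by
          have : k ≠ 1 := fun hh ↦ hk ⟨hk0, Or.inl hh⟩
          omega)]
        simpa using hp.one_lt.ne'
  · have h1 := not_dvd_den_bernoulli hp h
    refine not_dvd_den_of_mul_eq (D := (_root_.bernoulli k).den) (z := p * m * (_root_.bernoulli k).num) h1 ?_
    have := Rat.den_mul_eq_num (_root_.bernoulli k)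
    push_cast
    linear_combination (p * m : ℚ) * this

lemma dvd_den_mul_bernoulli {p : ℕ} (hp : p.Prime) {c k : ℕ} (hc : ¬ p ∣ c)
    (hk : k = 1 ∨ Even k) (hk0 : 0 < k) (h : (p - 1) ∣ k) :
    p ∣ ((c : ℚ) * _root_.bernoulli k).den := by
  obtain ⟨D, z, hD, hz⟩ := bernoulli_local_of_dvd hp hk hk0 h
  set x := (c : ℚ) * _root_.bernoulli k with hx
  have h1 := Rat.den_mul_eq_num x
  -- Clear denominators in `p * D * x = c * (p * z - D)` and reduce modulo `p`.
  have h2 : (p : ℤ) * (D * x.num - c * z * x.den) = -((c * D * x.den : ℕ) : ℤ) := by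
    have : (p : ℚ) * (D * x.num - c * z * x.den) = -(c * D * x.den) := by
      rw [← h1]
      linear_combination (c : ℚ) * x.den * hz + (p * D * x.den : ℚ) * hx
    push_cast
    exact_mod_cast this
  have h3 : p ∣ c * D * x.den := by
    rw [← Int.natCast_dvd_natCast, ← dvd_neg]
    exact Dvd.intro _ h2
  rcases (hp.dvd_mul).mp h3 with h4 | h4
  · rcases (hp.dvd_mul).mp h4 with h5 | h5
    · exact absurd h5 hc
    · exact absurd h5 hD
  · exact h4

/-! ### Binomial coefficients and digit sums -/

lemma digits_sum_mul_add {p : ℕ} (hp : 1 < p) (m r : ℕ) (hr : r < p) :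
    (Nat.digits p (p * m + r)).sum = r + (Nat.digits p m).sum := by
  rcases Nat.eq_zero_or_pos (p * m + r) with h | h
  · have hr0 : r = 0 := by omega
    have hm0 : m = 0 := by
      have : p * m = 0 := by omega
      rcases Nat.mul_eq_zero.mp this with h | h <;> omega
    simp [hr0, hm0]
  · rw [Nat.digits_def' hp h, List.sum_cons]
    congr 1
    · rw [Nat.mul_add_mod, Nat.mod_eq_of_lt hr]
    · rw [Nat.mul_add_div (by omega), Nat.div_eq_of_lt hr, add_zero]

/-- Any `t` units of the digit sum of `N` can be split off without carries. -/
lemma exists_split_digits {p : ℕ} (hp : 1 < p) (N : ℕ) : ∀ t ≤ (Nat.digits p N).sum,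
    ∃ a b, a + b = N ∧ (Nat.digits p a).sum = t ∧
      (Nat.digits p a).sum + (Nat.digits p b).sum = (Nat.digits p N).sum := by
  induction N using Nat.strong_induction_on with
  | _ N ih =>
    intro t ht
    rcases Nat.eq_zero_or_pos N with rfl | hN
    · refine ⟨0, 0, rfl, ?_, by simp⟩
      simp at ht ⊢
      exact ht.symm
    have hr := Nat.mod_lt N (show p > 0 by omega)
    have hN' := Nat.div_add_mod N p
    have hs := digits_sum_mul_add hp (N / p) (N % p) hr
    rw [hN'] at hs
    rcases le_or_gt t (N % p) with h | h
    · -- The units digit alone supplies `t`.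
      have ha := digits_sum_mul_add hp 0 t (by omega)
      have hb := digits_sum_mul_add hp (N / p) (N % p - t) (by omega)
      simp only [mul_zero, zero_add, Nat.digits_zero, List.sum_nil, add_zero] at ha
      exact ⟨t, p * (N / p) + (N % p - t), by omega, ha, by omega⟩
    · obtain ⟨a, b, hab, hat, hs'⟩ :=
        ih (N / p) (Nat.div_lt_self hN hp) (t - N % p) (by omega)
      have ha := digits_sum_mul_add hp a (N % p) hr
      have hb := digits_sum_mul_add hp b 0 (by omega)
      rw [add_zero] at hb
      refine ⟨p * a + N % p, p * b, ?_, by omega, by omega⟩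
      rw [← hab, mul_add] at hN'
      omega

lemma digits_sum_pos (p : ℕ) {m : ℕ} (hm : 0 < m) : 0 < (Nat.digits p m).sum := by
  by_contra h
  have h1 : (Nat.digits p m).sum = 0 := by omega
  rw [List.sum_eq_zero_iff] at h1
  have h2 := Nat.getLast_digit_ne_zero p hm.ne'
  exact h2 (h1 _ (List.getLast_mem _))

lemma modEq_digits_sum_sub_one {p : ℕ} (hp : 1 < p) (m : ℕ) :
    (p - 1) ∣ m ↔ (p - 1) ∣ (Nat.digits p m).sum := by
  have h : m ≡ (Nat.digits p m).sum [MOD (p - 1)] := by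
    rcases (show p = 2 ∨ 2 < p by omega) with rfl | h2
    · exact Nat.modEq_one
    · refine Nat.modEq_digits_sum (p - 1) p ?_ m
      rw [Nat.mod_eq_sub_mod (by omega), show p - (p - 1) = 1 by omega, Nat.mod_eq_of_lt (by omega)]
  exact h.dvd_iff dvd_rfl

lemma exists_choose_iff {p : ℕ} (hp : p.Prime) (N : ℕ) :
    (∃ k, 0 < k ∧ k < N ∧ (p - 1) ∣ k ∧ ¬ p ∣ N.choose k) ↔ p ≤ (Nat.digits p N).sum := by
  have := Fact.mk hp
  have hp1 := hp.one_lt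
  constructor
  · rintro ⟨k, hk0, hkN, hdvd, hc⟩
    have h := sub_one_mul_padicValNat_choose_eq_sub_sum_digits (p := p) hkN.le
    rw [padicValNat.eq_zero_of_not_dvd hc, mul_zero] at h
    have h1 := Nat.le_of_dvd (digits_sum_pos p hk0) ((modEq_digits_sum_sub_one hp1 k).mp hdvd)
    have h2 := digits_sum_pos p (show 0 < N - k by omega)
    omega
  · intro h
    obtain ⟨a, b, hab, ha, hs⟩ := exists_split_digits hp1 N (p - 1) (by omega)
    have ha0 : 0 < a := by
      rcases Nat.eq_zero_or_pos a with rfl | h0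
      · simp at ha
        omega
      · exact h0
    have hb0 : 0 < b := by
      rcases Nat.eq_zero_or_pos b with rfl | h0
      · simp at hs
        omega
      · exact h0
    refine ⟨a, ha0, by omega, (modEq_digits_sum_sub_one hp1 a).mpr (by rw [ha]), fun hc ↦ ?_⟩
    have hk := sub_one_mul_padicValNat_choose_eq_sub_sum_digits (p := p) (show a ≤ N by omega)
    rw [show N - a = b by omega, hs, Nat.sub_self] at hk
    have hv := one_le_padicValNat_of_dvd (Nat.choose_pos (show a ≤ N by omega)).ne' hc
    rcases Nat.mul_eq_zero.mp hk with h0 | h0 <;> omega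

lemma exists_dvd_den_iff {p : ℕ} (hp : p.Prime) (N : ℕ) :
    (∃ k < N, p ∣ ((N.choose k : ℚ) * _root_.bernoulli k).den) ↔
      ∃ k, 0 < k ∧ k < N ∧ (p - 1) ∣ k ∧ ¬ p ∣ N.choose k := by
  constructor
  · rintro ⟨k, hkN, hden⟩
    have hc : ¬ p ∣ N.choose k := fun hc ↦ not_dvd_den_mul_bernoulli hp hc hden
    have hk0 : 0 < k := by
      rcases Nat.eq_zero_or_pos k with rfl | h0
      · simp at hden
        exact absurd hden hp.one_lt.ne'
      · exact h0
    refine ⟨k, hk0, hkN, ?_, hc⟩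
    by_contra h
    have h1 := not_dvd_den_bernoulli hp h
    refine not_dvd_den_of_mul_eq (z := N.choose k * (_root_.bernoulli k).num) h1 ?_ hden
    have := Rat.den_mul_eq_num (_root_.bernoulli k)
    push_cast
    linear_combination (N.choose k : ℚ) * this
  · rintro ⟨k, hk0, hkN, hdvd, hc⟩
    by_cases hk : Even k
    · exact ⟨k, hkN, dvd_den_mul_bernoulli hp hc (Or.inr hk) hk0 hdvd⟩
    · have hkodd := Nat.not_even_iff_odd.mp hk
      -- `p - 1` divides an odd number.
      have hp2 : p = 2 := by
        by_contra h2
        exact hk ((hp.even_sub_one h2).two_dvd.trans hdvd |> even_iff_two_dvd.mpr)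
      subst hp2
      have hNodd : ¬ 2 ∣ N := by
        intro hN
        have h1 := Nat.add_one_mul_choose_eq (N - 1) (k - 1)
        rw [show N - 1 + 1 = N by omega, show k - 1 + 1 = k by omega] at h1
        have h2 : 2 ∣ N.choose k * k := h1 ▸ hN.mul_right _
        rcases Nat.prime_two.dvd_mul.mp h2 with h3 | h3
        · exact hc h3
        · exact hk (even_iff_two_dvd.mpr h3)
      exact ⟨1, by omega, dvd_den_mul_bernoulli hp (by simpa using hNodd) (Or.inl rfl) one_pos
        (by simp)⟩

/-! ### Coefficients of the power sum polynomial -/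

lemma eq_of_evalPS {n : ℕ} {P : ℚ[X]} (hP : evalPS n P) :
    P = X ^ n + C ((n + 1 : ℚ)⁻¹) * (Polynomial.bernoulli (n + 1) - C (_root_.bernoulli (n + 1))) := by
  apply Polynomial.eq_of_infinite_eval_eq
  refine (Set.infinite_range_of_injective (Nat.cast_injective (R := ℚ))).mono ?_
  rintro _ ⟨x, rfl⟩
  have hn : (n + 1 : ℚ) ≠ 0 := by positivity
  have h := Polynomial.sum_range_pow_eq_bernoulli_sub x n
  simp only [Nat.succ_eq_add_one] at h
  simp only [Set.mem_ofPred_eq, eval_add, eval_mul, eval_sub, eval_C, eval_pow, eval_X]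
  rw [hP x, Finset.sum_range_succ, ← h]
  field_simp
  ring

lemma isIntPoly_smul_iff {n : ℕ} {P : ℚ[X]} (hP : evalPS n P) (e : ℕ) :
    isIntPoly ((e : ℚ) • P) ↔
      ∀ k < n + 1, ∃ z : ℤ,
        (e : ℚ) * ((((n + 1).choose k : ℕ) : ℚ) * _root_.bernoulli k) / (n + 1) = z := by
  have hcoeff : ∀ i, ((e : ℚ) • P).coeff i = ((if i = n then e else 0 : ℤ) : ℚ) +
      e * ((Polynomial.bernoulli (n + 1)).coeff i -
        if i = 0 then _root_.bernoulli (n + 1) else 0) / (n + 1) := by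
    intro i
    rw [eq_of_evalPS hP, coeff_smul, coeff_add, coeff_C_mul, coeff_sub, coeff_X_pow, coeff_C]
    split_ifs <;> simp <;> ring
  constructor
  · intro h k hk
    obtain ⟨z, hz⟩ := h (n + 1 - k)
    rw [hcoeff, Polynomial.coeff_bernoulli, if_pos (show n + 1 - k ≤ n + 1 by omega),
      if_neg (show n + 1 - k ≠ 0 by omega), sub_zero,
      Nat.choose_symm (by omega), show n + 1 - (n + 1 - k) = k by omega] at hz
    refine ⟨z - (if n + 1 - k = n then e else 0 : ℤ), ?_⟩
    rw [Int.cast_sub, ← hz]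
    ring
  · intro h i
    rw [hcoeff, Polynomial.coeff_bernoulli]
    rcases Nat.eq_zero_or_pos i with rfl | hi
    · exact ⟨(if 0 = n then e else 0 : ℤ), by simp⟩
    by_cases hi' : i ≤ n + 1
    · obtain ⟨z, hz⟩ := h (n + 1 - i) (by omega)
      rw [Nat.choose_symm hi'] at hz
      refine ⟨(if i = n then e else 0 : ℤ) + z, ?_⟩
      rw [if_pos hi', if_neg (show i ≠ 0 by omega), Int.cast_add, ← hz]
      ring
    · refine ⟨(if i = n then e else 0 : ℤ), ?_⟩
      rw [if_neg hi', if_neg (show i ≠ 0 by omega)]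
      simp

lemma dvd_quot_iff {n : ℕ} {P : ℚ[X]} {d : ℕ} (hP : evalPS n P) (hd : isDenom P d) {p : ℕ}
    (hp : p.Prime) :
    p ∣ d / (n + 1) ↔
      ∃ k < n + 1, p ∣ ((((n + 1).choose k : ℕ) : ℚ) * _root_.bernoulli k).den := by
  obtain ⟨hd0, hint, hmin⟩ := hd
  have hn : (n + 1 : ℚ) ≠ 0 := by positivity
  rw [isIntPoly_smul_iff hP] at hint
  -- The leading coefficient of `P` is `1 / (n + 1)`.
  have hdvd : n + 1 ∣ d := by
    obtain ⟨z, hz⟩ := hint 0 (by omega)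
    rw [div_eq_iff hn] at hz
    simp at hz
    have : (d : ℤ) = z * (n + 1 : ℕ) := by
      push_cast
      exact_mod_cast hz
    exact Int.natCast_dvd_natCast.mp (Dvd.intro_left _ this.symm)
  obtain ⟨q, rfl⟩ := hdvd
  rw [Nat.mul_div_cancel_left _ (Nat.succ_pos n)]
  have hq0 : 0 < q := Nat.pos_of_mul_pos_left hd0
  have hint' : ∀ k < n + 1,
      ((((n + 1).choose k : ℕ) : ℚ) * _root_.bernoulli k).den ∣ q := by
    intro k hk
    obtain ⟨z, hz⟩ := hint k hk
    refine den_dvd_of_mul_eq (z := z) hq0 ?_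
    rw [← hz]
    push_cast
    field_simp
  constructor
  · rintro ⟨q', rfl⟩
    by_contra! hno
    have hq' : 0 < q' := Nat.pos_of_mul_pos_left hq0
    -- No denominator involves `p`, so the factor `p` can be dropped, against minimality.
    have hle : (n + 1) * (p * q') ≤ (n + 1) * q' := by
      refine hmin _ (by positivity) ((isIntPoly_smul_iff hP _).mpr fun k hk ↦ ?_)
      have hcop := ((Nat.Prime.coprime_iff_not_dvd hp).mpr (hno k hk)).symm
      obtain ⟨z, hz⟩ := exists_mul_eq_of_den_dvd (hcop.dvd_of_dvd_mul_left (hint' k hk))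
      refine ⟨z, ?_⟩
      rw [← hz]
      push_cast
      field_simp
    have h1 := Nat.le_of_mul_le_mul_left hle (Nat.succ_pos n)
    have := hp.two_le
    nlinarith
  · rintro ⟨k, hk, hpk⟩
    exact hpk.trans (hint' k hk)

theorem stmt8 (n : ℕ) (P : Polynomial ℚ) (d : ℕ)
    (hP : evalPS n P) (hd : isDenom P d) (p : ℕ) (hp : p.Prime) :
    p ∣ d / (n + 1) ↔ p ≤ (Nat.digits p (n + 1)).sum := by
  rw [dvd_quot_iff hP hd hp, exists_dvd_den_iff hp, exists_choose_iff hp]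
end
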